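/- arXiv:2209.12885 — 3 statements merged into one kernel-verified Lean document; each statement's English description precedes it below -/
import Mathlib

section
/- The Black–Scholes call price C(t,x) = x Φ(d₁(t,x)) − K e^{−r(T−t)} Φ(d₂(t,x)) satisfies the Black–Scholes partial differential equation ∂C/∂t (t,x) + (σ² x² / 2) ∂²C/∂x² (t,x) + r x ∂C/∂x (t,x) − r C(t,x) = 0 for every (t,x) ∈ [0,T) × (0,∞). -/
open MeasureTheory Real

/-- Standard normal density. -/
noncomputable def stdGaussianPDF (z : ℝ) : ℝ :=
  (Real.sqrt (2 * Real.pi))⁻¹ * Real.exp (-z ^ 2 / 2)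

/-- Standard normal cumulative distribution function. -/
noncomputable def stdGaussianCDF (x : ℝ) : ℝ :=
  ∫ z in Set.Iic x, stdGaussianPDF z

/-- `d₁` in the Black–Scholes formula. -/
noncomputable def bsD1 (r σ K T t x : ℝ) : ℝ :=
  (Real.log (x / K) + (r + σ ^ 2 / 2) * (T - t)) / (σ * Real.sqrt (T - t))

/-- `d₂` in the Black–Scholes formula. -/
noncomputable def bsD2 (r σ K T t x : ℝ) : ℝ :=
  bsD1 r σ K T t x - σ * Real.sqrt (T - t)

/-- Black–Scholes call price. -/
noncomputable def bsCall (r σ K T t x : ℝ) : ℝ :=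
  x * stdGaussianCDF (bsD1 r σ K T t x)
    - K * Real.exp (-(r * (T - t))) * stdGaussianCDF (bsD2 r σ K T t x)

lemma stdGaussianPDF_continuous : Continuous stdGaussianPDF := by
  unfold stdGaussianPDF
  fun_prop

lemma stdGaussianPDF_integrable : Integrable stdGaussianPDF := by
  have h := (integrable_exp_neg_mul_sq (b := 1 / 2) (by norm_num)).const_mul
    (Real.sqrt (2 * Real.pi))⁻¹
  refine h.congr (Filter.Eventually.of_forall fun z => ?_)
  simp only [stdGaussianPDF]
  congr 2
  ring

lemma stdGaussianCDF_hasDerivAt (x : ℝ) :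
    HasDerivAt stdGaussianCDF (stdGaussianPDF x) x := by
  have h1 : HasDerivAt (fun y => ∫ z in (0 : ℝ)..y, stdGaussianPDF z) (stdGaussianPDF x) x :=
    intervalIntegral.integral_hasDerivAt_right
      (stdGaussianPDF_continuous.intervalIntegrable _ _)
      (stdGaussianPDF_continuous.stronglyMeasurableAtFilter _ _)
      stdGaussianPDF_continuous.continuousAt
  have h2 : stdGaussianCDF =
      fun y => (∫ z in (0 : ℝ)..y, stdGaussianPDF z) + stdGaussianCDF 0 := by
    funext y
    have := intervalIntegral.integral_Iic_sub_Iic (a := 0) (b := y) (f := stdGaussianPDF)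
      (μ := volume) stdGaussianPDF_integrable.integrableOn stdGaussianPDF_integrable.integrableOn
    simp only [stdGaussianCDF]
    linarith
  rw [h2]
  exact h1.add_const _

/-- The key identity `x φ(d₁) = K e^{-r(T-t)} φ(d₂)`. -/
lemma bs_key (r σ K T t x : ℝ) (hσ : 0 < σ) (hK : 0 < K) (htT : t < T) (hx : 0 < x) :
    K * Real.exp (-(r * (T - t))) * stdGaussianPDF (bsD2 r σ K T t x)
      = x * stdGaussianPDF (bsD1 r σ K T t x) := by
  have hτ : 0 < T - t := sub_pos.2 htT
  have hs : 0 < Real.sqrt (T - t) := Real.sqrt_pos.2 hτ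
  have hsq : Real.sqrt (T - t) ^ 2 = T - t := Real.sq_sqrt hτ.le
  have hd : bsD1 r σ K T t x * (σ * Real.sqrt (T - t))
      = Real.log (x / K) + (r + σ ^ 2 / 2) * (T - t) := by
    unfold bsD1
    field_simp
  have he : -(bsD2 r σ K T t x) ^ 2 / 2
      = -(bsD1 r σ K T t x) ^ 2 / 2 + Real.log (x / K) + r * (T - t) := by
    unfold bsD2
    linear_combination hd - σ ^ 2 / 2 * hsq
  unfold stdGaussianPDF
  rw [he, Real.exp_add, Real.exp_add, Real.exp_log (div_pos hx hK), Real.exp_neg]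
  field_simp

lemma bsD1_hasDerivAt_x (r σ K T t x : ℝ) (hσ : 0 < σ) (hK : 0 < K) (htT : t < T) (hx : 0 < x) :
    HasDerivAt (fun y => bsD1 r σ K T t y) (1 / (x * (σ * Real.sqrt (T - t)))) x := by
  have hs : 0 < Real.sqrt (T - t) := Real.sqrt_pos.2 (sub_pos.2 htT)
  have h := ((((hasDerivAt_id x).div_const K).log (div_pos hx hK).ne').add_const
    ((r + σ ^ 2 / 2) * (T - t))).div_const (σ * Real.sqrt (T - t))
  refine h.congr_deriv ?_
  simp only [id]
  field_simp

lemma bsCall_hasDerivAt_x (r σ K T t x : ℝ) (hσ : 0 < σ) (hK : 0 < K) (htT : t < T)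
    (hx : 0 < x) :
    HasDerivAt (fun y => bsCall r σ K T t y) (stdGaussianCDF (bsD1 r σ K T t x)) x := by
  have h1 := bsD1_hasDerivAt_x r σ K T t x hσ hK htT hx
  have h2 : HasDerivAt (fun y => bsD2 r σ K T t y) _ x := h1.sub_const (σ * Real.sqrt (T - t))
  have h3 := (stdGaussianCDF_hasDerivAt (bsD1 r σ K T t x)).comp x h1
  have h4 := (stdGaussianCDF_hasDerivAt (bsD2 r σ K T t x)).comp x h2
  have h := ((hasDerivAt_id x).mul h3).sub (h4.const_mul (K * Real.exp (-(r * (T - t)))))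
  refine HasDerivAt.congr_deriv (f := fun y => bsCall r σ K T t y) h ?_
  have hk := bs_key r σ K T t x hσ hK htT hx
  simp only [id, Function.comp]
  linear_combination -(1 / (x * (σ * Real.sqrt (T - t)))) * hk

lemma bsCall_hasDerivAt_t (r σ K T t x : ℝ) (hσ : 0 < σ) (hK : 0 < K) (htT : t < T)
    (hx : 0 < x) :
    HasDerivAt (fun s => bsCall r σ K T s x)
      (-(r * K * Real.exp (-(r * (T - t))) * stdGaussianCDF (bsD2 r σ K T t x))
        - x * stdGaussianPDF (bsD1 r σ K T t x) * (σ / (2 * Real.sqrt (T - t)))) t := by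
  have hτ : 0 < T - t := sub_pos.2 htT
  have hs : 0 < Real.sqrt (T - t) := Real.sqrt_pos.2 hτ
  have hl : HasDerivAt (fun s : ℝ => T - s) (-1) t := (hasDerivAt_id t).const_sub T
  have hq : HasDerivAt (fun s : ℝ => σ * Real.sqrt (T - s))
      (σ * (-1 / (2 * Real.sqrt (T - t)))) t := (hl.sqrt hτ.ne').const_mul σ
  obtain ⟨D, h1⟩ : ∃ D, HasDerivAt (fun s => bsD1 r σ K T s x) D t :=
    ⟨_, ((hl.const_mul (r + σ ^ 2 / 2)).const_add (Real.log (x / K))).div hq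
      (mul_pos hσ hs).ne'⟩
  have h2 : HasDerivAt (fun s => bsD2 r σ K T s x) _ t := h1.sub hq
  have h3 := (stdGaussianCDF_hasDerivAt (bsD1 r σ K T t x)).comp t h1
  have h4 := (stdGaussianCDF_hasDerivAt (bsD2 r σ K T t x)).comp t h2
  have h5 : HasDerivAt (fun s : ℝ => K * Real.exp (-(r * (T - s))))
      (K * (Real.exp (-(r * (T - t))) * -(r * -1))) t :=
    ((hl.const_mul r).neg.exp).const_mul K
  have h := (h3.const_mul x).sub (h5.mul h4)
  refine HasDerivAt.congr_deriv (f := fun s => bsCall r σ K T s x) h ?_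
  have hk := bs_key r σ K T t x hσ hK htT hx
  simp only [Function.comp]
  linear_combination -(D + σ / (2 * Real.sqrt (T - t))) * hk

/-- The Black–Scholes call price satisfies the Black–Scholes PDE
`∂C/∂t + (σ² x² / 2) ∂²C/∂x² + r x ∂C/∂x − r C = 0` on `[0,T) × (0,∞)`. -/
theorem blackScholes_pde (r σ K T : ℝ) (hσ : 0 < σ) (hK : 0 < K) (hT : 0 < T)
    (t x : ℝ) (ht0 : 0 ≤ t) (htT : t < T) (hx : 0 < x) :
    deriv (fun s => bsCall r σ K T s x) t
      + σ ^ 2 * x ^ 2 / 2 * deriv (deriv (fun y => bsCall r σ K T t y)) x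
      + r * x * deriv (fun y => bsCall r σ K T t y) x
      - r * bsCall r σ K T t x = 0 := by
  have hτ : 0 < T - t := sub_pos.2 htT
  have hs : 0 < Real.sqrt (T - t) := Real.sqrt_pos.2 hτ
  have hxx : HasDerivAt (deriv (fun y => bsCall r σ K T t y))
      (stdGaussianPDF (bsD1 r σ K T t x) * (1 / (x * (σ * Real.sqrt (T - t))))) x := by
    refine HasDerivAt.congr_of_eventuallyEq
      ((stdGaussianCDF_hasDerivAt (bsD1 r σ K T t x)).comp x
        (bsD1_hasDerivAt_x r σ K T t x hσ hK htT hx)) ?_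
    filter_upwards [lt_mem_nhds hx] with y hy
    exact (bsCall_hasDerivAt_x r σ K T t y hσ hK htT hy).deriv
  rw [hxx.deriv, (bsCall_hasDerivAt_x r σ K T t x hσ hK htT hx).deriv,
    (bsCall_hasDerivAt_t r σ K T t x hσ hK htT hx).deriv]
  unfold bsCall
  field_simp
  ring
end

section
/- For every 0 ≤ t < T and x > 0, the Gaussian integral representation of the discounted call payoff equals the Black–Scholes formula: ∫_ℝ e^{−r(T−t)} max(x · exp((r − σ²/2)(T − t) + σ√(T − t) · z) − K, 0) φ(z) dz = C(t,x). -/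
open MeasureTheory Real

lemma stdGaussian_reflect (d s : ℝ) :
    ∫ z : ℝ, (Set.Iic d).indicator stdGaussianPDF (s - z) = stdGaussianCDF d := by
  rw [integral_sub_left_eq_self (fun z => (Set.Iic d).indicator stdGaussianPDF z) volume s,
    integral_indicator measurableSet_Iic]
  rfl

lemma stdGaussian_reflect_integrable (d s : ℝ) :
    Integrable (fun z : ℝ => (Set.Iic d).indicator stdGaussianPDF (s - z)) :=
  (stdGaussianPDF_integrable.indicator measurableSet_Iic).comp_sub_left s

/-- Gaussian integral representation of the discounted call payoff equals the
Black–Scholes formula. -/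
theorem blackScholes_integral_repr (r σ K T : ℝ) (hσ : 0 < σ) (hK : 0 < K) (hT : 0 < T)
    (t x : ℝ) (ht0 : 0 ≤ t) (htT : t < T) (hx : 0 < x) :
    ∫ z : ℝ, Real.exp (-(r * (T - t))) *
        max (x * Real.exp ((r - σ ^ 2 / 2) * (T - t) + σ * Real.sqrt (T - t) * z) - K) 0 *
        stdGaussianPDF z
      = bsCall r σ K T t x := by
  have hτ : 0 < T - t := sub_pos.mpr htT
  have hs : 0 < σ * Real.sqrt (T - t) := mul_pos hσ (Real.sqrt_pos.mpr hτ)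
  have hs2 : (σ * Real.sqrt (T - t)) ^ 2 = σ ^ 2 * (T - t) := by
    rw [mul_pow, Real.sq_sqrt hτ.le]
  have hd1 : σ * Real.sqrt (T - t) * bsD1 r σ K T t x
      = Real.log (x / K) + (r + σ ^ 2 / 2) * (T - t) := by
    unfold bsD1
    field_simp
  have hd2 : bsD2 r σ K T t x = bsD1 r σ K T t x - σ * Real.sqrt (T - t) := rfl
  unfold bsCall
  rw [← stdGaussian_reflect (bsD1 r σ K T t x) (σ * Real.sqrt (T - t)),
    ← stdGaussian_reflect (bsD2 r σ K T t x) 0, ← integral_const_mul, ← integral_const_mul,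
    ← integral_sub ((stdGaussian_reflect_integrable _ _).const_mul _)
      ((stdGaussian_reflect_integrable _ _).const_mul _)]
  congr 1
  funext z
  generalize bsD1 r σ K T t x = d1 at *
  generalize bsD2 r σ K T t x = d2 at *
  generalize σ * Real.sqrt (T - t) = s at *
  have hpay : x * Real.exp ((r - σ ^ 2 / 2) * (T - t) + s * z) = K * Real.exp (s * (d2 + z)) := by
    have e : s * (d2 + z) = Real.log (x / K) + ((r - σ ^ 2 / 2) * (T - t) + s * z) := by
      rw [hd2]; linear_combination hd1 - hs2
    rw [e, Real.exp_add (Real.log (x / K)), Real.exp_log (div_pos hx hK)]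
    field_simp
  have hmem : s - z ∈ Set.Iic d1 ↔ 0 - z ∈ Set.Iic d2 := by
    simp only [Set.mem_Iic, hd2]
    constructor <;> intro h <;> linarith
  by_cases h : 0 - z ∈ Set.Iic d2
  · rw [Set.indicator_of_mem h, Set.indicator_of_mem (hmem.mpr h)]
    have h0 : 0 ≤ s * (d2 + z) := mul_nonneg hs.le (by have := Set.mem_Iic.mp h; linarith)
    rw [max_eq_left (by rw [hpay]; nlinarith [Real.one_le_exp h0])]
    have e1 : Real.exp (-(r * (T - t))) * Real.exp ((r - σ ^ 2 / 2) * (T - t) + s * z)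
        * Real.exp (-z ^ 2 / 2) = Real.exp (-(s - z) ^ 2 / 2) := by
      rw [← Real.exp_add, ← Real.exp_add]
      congr 1
      linear_combination hs2 / 2
    have e2 : -(0 - z) ^ 2 / 2 = -z ^ 2 / 2 := by ring
    simp only [stdGaussianPDF]
    rw [← e1, e2]
    ring
  · rw [Set.indicator_of_notMem h, Set.indicator_of_notMem (fun h' => h (hmem.mp h'))]
    have h0 : s * (d2 + z) ≤ 0 :=
      mul_nonpos_of_nonneg_of_nonpos hs.le (by
        have := not_le.mp (fun h' => h (Set.mem_Iic.mpr h')); linarith)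
    rw [max_eq_right (by rw [hpay]; nlinarith [Real.exp_le_one_iff.mpr h0])]
    ring
end

section
/- Let κ, θ, σ, h > 0 satisfy κθ ≥ σ²/2, let V > 0 and let Δ ∈ ℝ. Then there exists a unique v > 0 such that v = V + κ(θ − v)h − (σ²/2)h + σ√v · Δ. Equivalently, the quadratic (1 + κh) y² − σΔ y − (V + κθh − (σ²/2)h) = 0 has a unique positive root y, and v = y². Hence the fully implicit Euler step of the Heston volatility scheme preserves positivity. -/
theorem quad_unique_pos_root (a b c : ℝ) (ha : 0 < a) (hc : 0 < c) :
    ∃! y : ℝ, 0 < y ∧ a * y ^ 2 - b * y - c = 0 := by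
  have hac : 0 < a * c := mul_pos ha hc
  have hs : Real.sqrt (b ^ 2 + 4 * (a * c)) ^ 2 = b ^ 2 + 4 * (a * c) :=
    Real.sq_sqrt (by positivity)
  have hlt : |b| < Real.sqrt (b ^ 2 + 4 * (a * c)) := by
    apply Real.lt_sqrt_of_sq_lt
    rw [sq_abs]
    linarith
  have hb := neg_abs_le b
  refine ⟨(b + Real.sqrt (b ^ 2 + 4 * (a * c))) / (2 * a), ⟨?_, ?_⟩, ?_⟩
  · apply div_pos <;> linarith
  · generalize Real.sqrt (b ^ 2 + 4 * (a * c)) = s at hs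
    field_simp
    linear_combination hs
  · rintro z ⟨hz, hzq⟩
    have h1 : (2 * a * z - b) ^ 2 = b ^ 2 + 4 * (a * c) := by
      linear_combination 4 * a * hzq
    have h2 : 0 ≤ 2 * a * z - b := by
      have h3 : z * (2 * a * z - b) = a * z ^ 2 + c := by linear_combination hzq
      have h4 : 0 < z * (2 * a * z - b) := by rw [h3]; positivity
      exact (pos_of_mul_pos_right h4 hz.le).le
    rw [← h1, Real.sqrt_sq h2]
    field_simp
    ring

/-- The fully implicit Euler step of the Heston volatility scheme preserves positivity:
under `κθ ≥ σ²/2` there is a unique `v > 0` with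
`v = V + κ(θ − v)h − (σ²/2)h + σ√v·Δ`; equivalently, the quadratic
`(1 + κh) y² − σΔ y − (V + κθh − (σ²/2)h) = 0` has a unique positive root `y`,
and `v = y²` solves the implicit equation. -/
theorem heston_implicit_euler_positivity
    (κ θ σ h : ℝ) (hκ : 0 < κ) (hθ : 0 < θ) (hσ : 0 < σ) (hh : 0 < h)
    (hFeller : σ ^ 2 / 2 ≤ κ * θ) (V : ℝ) (hV : 0 < V) (Δ : ℝ) :
    (∃! v : ℝ, 0 < v ∧
        v = V + κ * (θ - v) * h - σ ^ 2 / 2 * h + σ * Real.sqrt v * Δ) ∧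
    (∃! y : ℝ, 0 < y ∧
        (1 + κ * h) * y ^ 2 - σ * Δ * y - (V + κ * θ * h - σ ^ 2 / 2 * h) = 0) ∧
    (∀ y : ℝ, 0 < y →
        (1 + κ * h) * y ^ 2 - σ * Δ * y - (V + κ * θ * h - σ ^ 2 / 2 * h) = 0 →
        0 < y ^ 2 ∧
        y ^ 2 = V + κ * (θ - y ^ 2) * h - σ ^ 2 / 2 * h
          + σ * Real.sqrt (y ^ 2) * Δ) := by
  have ha : 0 < 1 + κ * h := by positivity
  have hc : 0 < V + κ * θ * h - σ ^ 2 / 2 * h := by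
    have := mul_le_mul_of_nonneg_right hFeller hh.le
    linarith
  have hq := quad_unique_pos_root (1 + κ * h) (σ * Δ) _ ha hc
  have hstep : ∀ y : ℝ, 0 < y →
        (1 + κ * h) * y ^ 2 - σ * Δ * y - (V + κ * θ * h - σ ^ 2 / 2 * h) = 0 →
        0 < y ^ 2 ∧
        y ^ 2 = V + κ * (θ - y ^ 2) * h - σ ^ 2 / 2 * h
          + σ * Real.sqrt (y ^ 2) * Δ := by
    intro y hy hyq
    refine ⟨by positivity, ?_⟩
    rw [Real.sqrt_sq hy.le]
    linear_combination hyq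
  refine ⟨?_, hq, hstep⟩
  obtain ⟨y, ⟨hy, hyq⟩, huniq⟩ := hq
  refine ⟨y ^ 2, hstep y hy hyq, ?_⟩
  rintro v ⟨hv, hve⟩
  have hsq := Real.sq_sqrt hv.le
  have := huniq (Real.sqrt v) ⟨Real.sqrt_pos.mpr hv, by
    linear_combination (1 + κ * h) * hsq + hve⟩
  rw [← this, hsq]
end
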